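/- Let X be an ideal of L⁰(Ω, Σ, ℙ) containing the constants and admitting a strictly positive order continuous functional, and let f ∈ X₊. For g ∈ X, the following are equivalent: (a) g ∈ L⁰(σ(f)) ∩ X; (b) g lies in the σ(X, X_n^∼)-closure of the option space O_f = span{1, (f−k)⁺ : k ∈ ℝ}; (c) there exists a sequence (g_n) in O_f with g_n → g almost everywhere. -/

import Mathlib

open MeasureTheory Filter

universe u

variable {Ω : Type u}

/-- An ideal (solid subspace) of `L⁰`. -/
def IsIdealL0 {m0 : MeasurableSpace Ω} {μ : Measure Ω} (X : Submodule ℝ (Ω →ₘ[μ] ℝ)) : Prop :=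
  ∀ x y : Ω →ₘ[μ] ℝ, |x| ≤ |y| → y ∈ X → x ∈ X

/-- Order convergence of a net `y` to `x` within the subspace `X` of `L⁰`: there is a net
`z` in `X`, antitone, with infimum `0` relative to `X`, eventually dominating `|y a - x|`. -/
def OrderConvNetIn {m0 : MeasurableSpace Ω} {μ : Measure Ω} (X : Submodule ℝ (Ω →ₘ[μ] ℝ))
    {ι : Type*} [Preorder ι] (y : ι → (Ω →ₘ[μ] ℝ)) (x : Ω →ₘ[μ] ℝ) : Prop :=
  ∃ z : ι → (Ω →ₘ[μ] ℝ), (∀ a, z a ∈ X) ∧ Antitone z ∧ (∀ a, 0 ≤ z a) ∧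
    (∀ h ∈ X, (∀ a, h ≤ z a) → h ≤ 0) ∧ ∀ᶠ a in atTop, |y a - x| ≤ z a

/-- A subset `Y` of `X ⊆ L⁰` is order closed in `X` if it contains the limit of any net of
its elements order-converging (within `X`) to an element of `X`. -/
def OrderClosedIn {m0 : MeasurableSpace Ω} {μ : Measure Ω} (X : Submodule ℝ (Ω →ₘ[μ] ℝ))
    (Y : Set (Ω →ₘ[μ] ℝ)) : Prop :=
  ∀ (ι : Type u) (_ : Preorder ι) (_ : IsDirected ι (· ≤ ·)) (_ : Nonempty ι)
    (y : ι → (Ω →ₘ[μ] ℝ)) (x : Ω →ₘ[μ] ℝ),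
    (∀ a, y a ∈ Y) → x ∈ X → OrderConvNetIn X y x → x ∈ Y

/-- A functional on the subspace `X` of `L⁰` is order continuous if it carries nets
order-converging to `0` (within `X`) to nets converging to `0` in `ℝ`. -/
def OrderContinuousOn {m0 : MeasurableSpace Ω} {μ : Measure Ω}
    (X : Submodule ℝ (Ω →ₘ[μ] ℝ)) (φ : ↥X → ℝ) : Prop :=
  ∀ (ι : Type u) (_ : Preorder ι) (_ : IsDirected ι (· ≤ ·)) (_ : Nonempty ι)
    (y : ι → ↥X), OrderConvNetIn X (fun a => (y a : Ω →ₘ[μ] ℝ)) 0 →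
      Tendsto (fun a => φ (y a)) atTop (nhds 0)

/-- A functional on `X` is strictly positive if `φ(x) > 0` whenever `x > 0`. -/
def StrictlyPositiveOn {m0 : MeasurableSpace Ω} {μ : Measure Ω}
    (X : Submodule ℝ (Ω →ₘ[μ] ℝ)) (φ : ↥X → ℝ) : Prop :=
  ∀ x : ↥X, 0 < (x : Ω →ₘ[μ] ℝ) → 0 < φ x

/-- The weak topology `σ(X, Xₙ~)` induced on `X` by its order continuous dual. -/
noncomputable def weakOCTopology {m0 : MeasurableSpace Ω} {μ : Measure Ω}
    (X : Submodule ℝ (Ω →ₘ[μ] ℝ)) : TopologicalSpace ↥X :=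
  ⨅ φ ∈ {φ : ↥X →ₗ[ℝ] ℝ | OrderContinuousOn X ⇑φ},
    TopologicalSpace.induced ⇑φ inferInstance

/-- The option space `O_f = span{1, (f-k)⁺ : k ∈ ℝ}` of a claim `f ∈ L⁰`. -/
def optionSpace {m0 : MeasurableSpace Ω} {μ : Measure Ω} (f : Ω →ₘ[μ] ℝ) :
    Submodule ℝ (Ω →ₘ[μ] ℝ) :=
  Submodule.span ℝ ({1} ∪ {g | ∃ k : ℝ, g = (f - k • (1 : Ω →ₘ[μ] ℝ)) ⊔ 0})

/-!
Let `φ` be a strictly positive order continuous functional on `X`. By order continuity, weakly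
closed sets are closed under dominated almost everywhere limits. Call spreads
`a ((f - k)⁺ - (f - k - 1/a)⁺)` lie between `0` and `1` and converge to the indicator of `{f > k}`
as `a → ∞`, so a monotone class argument puts every `σ(f)`-measurable element of `X` in the weak
closure of the option space.

Conversely, functionals bounded with respect to the seminorm `φ |·|` are order continuous, so by
Mazur's theorem a weak limit `g` of options is a `φ |·|`-limit of some sequence `gₙ` of them. If
`φ |gₙ - g| ≤ 2⁻ⁿ`, then `∑ |gₙ - g|` is finite almost everywhere, since otherwise `φ` would be
bounded on the multiples of a nonzero indicator; hence `gₙ → g` almost everywhere. Finally,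
almost everywhere limits of options are `σ(f)`-measurable up to a null set.
-/

open scoped Topology

section MonotoneClass

/-- `L` contains the pointwise limits of its sequences that are dominated by a member of `D`; for
representatives of elements of an ideal of `L⁰` this is sequential order closedness. -/
def IsDominatedClosed (D L : Submodule ℝ (Ω → ℝ)) : Prop :=
  ∀ ⦃u : ℕ → Ω → ℝ⦄ ⦃v w : Ω → ℝ⦄, (∀ n, u n ∈ L) → w ∈ D → (∀ n ω, |u n ω| ≤ w ω) →
    (∀ ω, Tendsto (fun n => u n ω) atTop (𝓝 (v ω))) → v ∈ L

variable {D L : Submodule ℝ (Ω → ℝ)} {m : MeasurableSpace Ω}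

lemma abs_indicator_one_le_one (s : Set Ω) (ω : Ω) : |s.indicator (1 : Ω → ℝ) ω| ≤ 1 := by
  by_cases h : ω ∈ s <;> simp [h]

theorem IsDominatedClosed.indicator_mem_of_generateFrom (hL : IsDominatedClosed D L)
    (h1D : 1 ∈ D) (h1L : 1 ∈ L) {C : Set (Set Ω)} (hm : m = MeasurableSpace.generateFrom C)
    (hC : IsPiSystem C) (hCL : ∀ s ∈ C, s.indicator 1 ∈ L) {s : Set Ω} (hs : MeasurableSet[m] s) :
    s.indicator 1 ∈ L := by
  induction s, hs using MeasurableSpace.induction_on_inter hm hC with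
  | empty => simpa only [Set.indicator_empty'] using L.zero_mem
  | basic s hs => exact hCL s hs
  | compl s _ ih => simpa [Set.indicator_compl] using L.sub_mem h1L ih
  | iUnion s hdisj _ ih =>
    refine hL (u := fun n => (⋃ i ∈ Finset.range n, s i).indicator 1) (fun n => ?_) h1D
      (fun n ω => abs_indicator_one_le_one _ ω) fun ω =>
        ((tendsto_indicator_biUnion_finset s 1 ω).comp tendsto_finset_range).mono_right
          (pure_le_nhds _)
    rw [Finset.indicator_biUnion _ _ fun i _ j _ hij => hdisj hij]
    exact (Finset.sum_fn (Finset.range n) fun i => (s i).indicator (1 : Ω → ℝ)) ▸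
      L.sum_mem fun i _ => ih i

lemma simpleFunc_mem_of_indicator_mem
    (hL : ∀ s, MeasurableSet[m] s → s.indicator 1 ∈ L) (g : @SimpleFunc Ω m ℝ) : ⇑g ∈ L := by
  induction g using SimpleFunc.induction with
  | @const c s hs =>
    convert L.smul_mem c (hL _ hs) using 1
    ext ω
    by_cases h : ω ∈ s <;> simp [h]
  | add _ hg hh => exact L.add_mem hg hh

theorem IsDominatedClosed.mem_of_measurable (hL : IsDominatedClosed D L)
    (hind : ∀ s, MeasurableSet[m] s → s.indicator 1 ∈ L) {g : Ω → ℝ} (hg : Measurable[m] g)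
    (hgD : |g| ∈ D) : g ∈ L := by
  refine hL (u := fun n => SimpleFunc.approxOn g hg Set.univ 0 (Set.mem_univ 0) n)
    (fun n => simpleFunc_mem_of_indicator_mem hind _) (D.add_mem hgD hgD)
    (fun n ω => SimpleFunc.norm_approxOn_zero_le hg (Set.mem_univ 0) ω n)
    fun ω => SimpleFunc.tendsto_approxOn hg (Set.mem_univ 0) (by simp)

end MonotoneClass

section CallSpread

lemma mul_callSpread_eq_min {a : ℝ} (ha : 0 < a) (t k : ℝ) :
    a * (max (t - k) 0 - max (t - (k + a⁻¹)) 0) = min (a * max (t - k) 0) 1 := by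
  have hcancel : a * (t - (k + a⁻¹)) = a * (t - k) - 1 := by field_simp; ring
  rw [mul_sub, mul_max_of_nonneg _ _ ha.le, mul_max_of_nonneg _ _ ha.le, hcancel, mul_zero]
  grind

lemma abs_min_mul_posPart_le_one {a : ℝ} (ha : 0 ≤ a) (t k : ℝ) :
    |min (a * max (t - k) 0) 1| ≤ 1 := by
  rw [abs_of_nonneg (by positivity)]
  exact min_le_right _ _

lemma tendsto_min_mul_posPart (t k : ℝ) :
    Tendsto (fun n : ℕ => min ((n + 1 : ℝ) * max (t - k) 0) 1) atTop
      (𝓝 ((Set.Ioi k).indicator 1 t)) := by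
  rcases le_or_gt t k with h | h
  · simp [h, not_lt.2 h]
  · have hpos : 0 < t - k := sub_pos.2 h
    obtain ⟨N, hN⟩ := exists_nat_gt (t - k)⁻¹
    refine tendsto_const_nhds.congr' <| (eventually_ge_atTop N).mono fun n hn => ?_
    have hn : (t - k)⁻¹ ≤ n + 1 := hN.le.trans (by exact_mod_cast Nat.le_succ_of_le hn)
    have : 1 ≤ (n + 1 : ℝ) * max (t - k) 0 := by
      rw [max_eq_left hpos.le]
      exact (inv_le_iff_one_le_mul₀ hpos).1 hn
    simp [h, this]

end CallSpread

lemma aestronglyMeasurable_of_ae_tendsto {m m0 : MeasurableSpace Ω} {μ : Measure Ω}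
    {E ι : Type*} [TopologicalSpace E] [TopologicalSpace.IsCompletelyMetrizableSpace E] [Nonempty E]
    [Countable ι] {l : Filter ι} [l.NeBot] [l.IsCountablyGenerated] {y : ι → Ω → E} {g : Ω → E}
    (hy : ∀ i, AEStronglyMeasurable[m] (y i) μ)
    (hlim : ∀ᵐ ω ∂μ, Tendsto (fun i => y i ω) l (𝓝 (g ω))) : AEStronglyMeasurable[m] g μ := by
  refine ⟨fun ω => limUnder l fun i => (hy i).mk _ ω,
    @StronglyMeasurable.limUnder _ _ _ m _ _ l _ _ _ _ fun i => (hy i).stronglyMeasurable_mk, ?_⟩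
  filter_upwards [hlim, ae_all_iff.2 fun i => (hy i).ae_eq_mk] with ω hω hmk
  simp only [hmk] at hω
  exact hω.limUnder_eq.symm

variable {m0 : MeasurableSpace Ω} {μ : Measure Ω} {X : Submodule ℝ (Ω →ₘ[μ] ℝ)}

section L0

instance instIsOrderedAddMonoidAEEqFun {γ : Type*} [TopologicalSpace γ] [AddCommMonoid γ]
    [ContinuousAdd γ] [PartialOrder γ] [IsOrderedAddMonoid γ] :
    IsOrderedAddMonoid (Ω →ₘ[μ] γ) where
  add_le_add_left x y h z := by
    rw [← AEEqFun.coeFn_le] at h ⊢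
    filter_upwards [h, AEEqFun.coeFn_add x z, AEEqFun.coeFn_add y z] with ω hω hx hy
    rw [hx, hy]
    exact add_le_add_left hω (z ω)

variable {x y : Ω →ₘ[μ] ℝ}

lemma nonneg_iff_ae_nonneg : 0 ≤ x ↔ ∀ᵐ ω ∂μ, 0 ≤ x ω := by
  rw [← AEEqFun.coeFn_le]
  exact eventually_congr (AEEqFun.coeFn_zero.mono fun ω hω => by rw [hω, Pi.zero_apply])

lemma abs_le_iff_ae_abs_le : |x| ≤ y ↔ ∀ᵐ ω ∂μ, |x ω| ≤ y ω := by
  rw [← AEEqFun.coeFn_le]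
  exact eventually_congr ((AEEqFun.coeFn_abs x).mono fun ω hω => by rw [hω])

lemma IsIdealL0.mem_of_abs_le (hX : IsIdealL0 X) (h : |x| ≤ y) (hy : y ∈ X) : x ∈ X :=
  hX x y (h.trans (le_abs_self y)) hy

lemma IsIdealL0.abs_mem (hX : IsIdealL0 X) (hx : x ∈ X) : |x| ∈ X :=
  hX _ x (abs_abs x).le hx

lemma IsIdealL0.mem_of_ae_abs_le_one (hX : IsIdealL0 X) (h1 : 1 ∈ X)
    (h : ∀ᵐ ω ∂μ, |x ω| ≤ 1) : x ∈ X := by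
  refine hX.mem_of_abs_le (abs_le_iff_ae_abs_le.2 ?_) h1
  filter_upwards [h, AEEqFun.coeFn_one (α := Ω) (β := ℝ) (μ := μ)] with ω hω hone
  rwa [hone]

end L0

section Representatives

/-- The functions that represent, up to a null set, an element of `V`. It lets the monotone class
argument for `L⁰` run on honest functions. -/
def representatives (V : Submodule ℝ (Ω →ₘ[μ] ℝ)) : Submodule ℝ (Ω → ℝ) where
  carrier := {u | ∃ x ∈ V, x =ᵐ[μ] u}
  zero_mem' := ⟨0, V.zero_mem, AEEqFun.coeFn_zero⟩
  add_mem' := by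
    rintro u v ⟨x, hx, hxu⟩ ⟨y, hy, hyv⟩
    exact ⟨x + y, V.add_mem hx hy, (AEEqFun.coeFn_add x y).trans (hxu.add hyv)⟩
  smul_mem' := by
    rintro c u ⟨x, hx, hxu⟩
    exact ⟨c • x, V.smul_mem c hx, (AEEqFun.coeFn_smul c x).trans (hxu.const_smul c)⟩

variable {V : Submodule ℝ (Ω →ₘ[μ] ℝ)} {u v : Ω → ℝ}

lemma mem_of_ae_eq_of_mem_representatives {x : Ω →ₘ[μ] ℝ} (hx : x =ᵐ[μ] u)
    (hu : u ∈ representatives V) : x ∈ V := by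
  obtain ⟨y, hy, hyu⟩ := hu
  rwa [AEEqFun.ext (hx.trans hyu.symm)]

lemma one_mem_representatives (h1 : 1 ∈ V) : 1 ∈ representatives V :=
  ⟨1, h1, AEEqFun.coeFn_one⟩

lemma representatives_mono {W : Submodule ℝ (Ω →ₘ[μ] ℝ)} (h : V ≤ W) :
    representatives V ≤ representatives W :=
  fun _ ⟨x, hx, hxu⟩ => ⟨x, h hx, hxu⟩

/-- Dominated almost everywhere convergence of a sequence, the bound being taken in `X`. -/
structure DominatedTendsto (X : Submodule ℝ (Ω →ₘ[μ] ℝ)) (y : ℕ → Ω →ₘ[μ] ℝ)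
    (x : Ω →ₘ[μ] ℝ) : Prop where
  exists_bound : ∃ w ∈ X, ∀ n, |y n| ≤ w
  ae_tendsto : ∀ᵐ ω ∂μ, Tendsto (fun n => y n ω) atTop (𝓝 (x ω))

lemma isDominatedClosed_representatives
    (hV : ∀ y x, (∀ n, y n ∈ V) → DominatedTendsto X y x → x ∈ V) :
    IsDominatedClosed (representatives X) (representatives V) := by
  rintro u v w hu ⟨x, hxX, hxw⟩ huw hlim
  choose y hyV hyu using hu
  have hyu' : ∀ᵐ ω ∂μ, ∀ n, y n ω = u n ω := ae_all_iff.2 hyu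
  have hv : AEStronglyMeasurable v μ := by
    refine aestronglyMeasurable_of_tendsto_ae atTop (fun n => (y n).aestronglyMeasurable) ?_
    filter_upwards [hyu'] with ω hω
    simpa only [hω] using hlim ω
  refine ⟨AEEqFun.mk v hv, hV y _ hyV ⟨⟨x, hxX, fun n => ?_⟩, ?_⟩, AEEqFun.coeFn_mk v hv⟩
  · apply abs_le_iff_ae_abs_le.2
    filter_upwards [hyu', hxw] with ω hω hwω
    simpa only [hω, hwω] using huw n ω
  · filter_upwards [hyu', AEEqFun.coeFn_mk v hv] with ω hω hvω
    simpa only [hω, hvω] using hlim ω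

end Representatives

section OptionSpace

variable (f : Ω →ₘ[μ] ℝ)

lemma one_mem_optionSpace : 1 ∈ optionSpace f :=
  Submodule.subset_span (Or.inl rfl)

lemma coeFn_call (k : ℝ) :
    ⇑((f - k • (1 : Ω →ₘ[μ] ℝ)) ⊔ 0) =ᵐ[μ] fun ω => max (f ω - k) 0 := by
  filter_upwards [AEEqFun.coeFn_sup (f - k • 1) (0 : Ω →ₘ[μ] ℝ), AEEqFun.coeFn_sub f (k • 1),
    AEEqFun.coeFn_smul k (1 : Ω →ₘ[μ] ℝ), AEEqFun.coeFn_one (α := Ω) (β := ℝ) (μ := μ),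
    AEEqFun.coeFn_zero (α := Ω) (β := ℝ) (μ := μ)] with ω hsup hsub hsmul hone hzero
  simp [hsup, hsub, hsmul, hone, hzero]

lemma call_mem_representatives_optionSpace (k : ℝ) :
    (fun ω => max (f ω - k) 0) ∈ representatives (optionSpace f) :=
  ⟨_, Submodule.subset_span (Or.inr ⟨k, rfl⟩), coeFn_call f k⟩

lemma min_mul_call_mem_representatives_optionSpace {a : ℝ} (ha : 0 < a) (k : ℝ) :
    (fun ω => min (a * max (f ω - k) 0) 1) ∈ representatives (optionSpace f) := by
  simp_rw [← mul_callSpread_eq_min ha]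
  exact Submodule.smul_mem _ a <| Submodule.sub_mem _
    (call_mem_representatives_optionSpace f k) (call_mem_representatives_optionSpace f (k + a⁻¹))

lemma min_mul_call_mem_representatives_inf_optionSpace (hX : IsIdealL0 X) (h1 : 1 ∈ X)
    {a : ℝ} (ha : 0 < a) (k : ℝ) :
    (fun ω => min (a * max (f ω - k) 0) 1) ∈ representatives (X ⊓ optionSpace f) := by
  obtain ⟨x, hxO, hx⟩ := min_mul_call_mem_representatives_optionSpace f ha k
  refine ⟨x, ⟨hX.mem_of_ae_abs_le_one h1 ?_, hxO⟩, hx⟩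
  filter_upwards [hx] with ω hω
  rw [hω]
  exact abs_min_mul_posPart_le_one ha.le _ _

variable {f}

/-- Call spreads on `f` converge boundedly to the indicators of the sets `{f > k}`, which form a
π-system generating `σ(f)`. -/
theorem mem_of_measurable_comap (hX : IsIdealL0 X) (h1 : 1 ∈ X) {V : Submodule ℝ (Ω →ₘ[μ] ℝ)}
    (hV : ∀ y x, (∀ n, y n ∈ V) → DominatedTendsto X y x → x ∈ V) (hfV : X ⊓ optionSpace f ≤ V)
    {g : Ω →ₘ[μ] ℝ} (hgX : g ∈ X) {g' : Ω → ℝ}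
    (hg' : Measurable[MeasurableSpace.comap f inferInstance] g') (hgg' : g =ᵐ[μ] g') : g ∈ V := by
  have hclosed := isDominatedClosed_representatives hV
  have h1X : 1 ∈ representatives X := one_mem_representatives h1
  have h1V : 1 ∈ representatives V := one_mem_representatives (hfV ⟨h1, one_mem_optionSpace f⟩)
  have hIoi : ∀ s ∈ {s | ∃ t ∈ Set.range Set.Ioi, ⇑f ⁻¹' t = s},
      s.indicator 1 ∈ representatives V := by
    rintro _ ⟨_, ⟨k, rfl⟩, rfl⟩
    refine hclosed (fun n => representatives_mono hfV
      (min_mul_call_mem_representatives_inf_optionSpace f hX h1 n.cast_add_one_pos k)) h1X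
      (fun n ω => abs_min_mul_posPart_le_one n.cast_add_one_pos.le _ _) fun ω => ?_
    exact tendsto_min_mul_posPart (f ω) k
  have hgen : MeasurableSpace.comap f inferInstance =
      MeasurableSpace.generateFrom {s | ∃ t ∈ Set.range Set.Ioi, ⇑f ⁻¹' t = s} := by
    rw [BorelSpace.measurable_eq (α := ℝ), borel_eq_generateFrom_Ioi,
      MeasurableSpace.comap_generateFrom]
    rfl
  have habs : |g'| ∈ representatives X := by
    refine ⟨|g|, hX.abs_mem hgX, ?_⟩
    filter_upwards [AEEqFun.coeFn_abs g, hgg'] with ω habs hω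
    rw [habs, hω, Pi.abs_apply]
  exact mem_of_ae_eq_of_mem_representatives hgg' <| hclosed.mem_of_measurable
    (fun s => hclosed.indicator_mem_of_generateFrom h1X h1V hgen (isPiSystem_Ioi.comap f) hIoi)
    hg' habs

lemma aestronglyMeasurable_comap_of_mem_optionSpace {y : Ω →ₘ[μ] ℝ} (hy : y ∈ optionSpace f) :
    AEStronglyMeasurable[MeasurableSpace.comap f inferInstance] y μ := by
  have hf : Measurable[MeasurableSpace.comap f inferInstance] f := comap_measurable f
  induction hy using Submodule.span_induction with
  | mem y hy =>
    rcases hy with rfl | ⟨k, rfl⟩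
    · exact aestronglyMeasurable_const.congr AEEqFun.coeFn_one.symm
    · exact ((hf.sub_const k).max measurable_const).stronglyMeasurable.aestronglyMeasurable.congr
        (coeFn_call f k).symm
  | zero => exact aestronglyMeasurable_const.congr AEEqFun.coeFn_zero.symm
  | add x y _ _ hx hy => exact (hx.add hy).congr (AEEqFun.coeFn_add x y).symm
  | smul c x _ hx => exact (hx.const_smul c).congr (AEEqFun.coeFn_smul c x).symm

end OptionSpace

section TailSup

/-- The supremum of the absolute values of the terms of `a` from the index `n` on. -/
noncomputable def tailSup (a : ℕ → ℝ) (n : ℕ) : ℝ :=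
  ⨆ k, |a (n + k)|

variable {a : ℕ → ℝ}

lemma abs_le_tailSup (ha : BddAbove (Set.range fun n => |a n|)) {n j : ℕ} (h : n ≤ j) :
    |a j| ≤ tailSup a n := by
  have hbdd : BddAbove (Set.range fun k => |a (n + k)|) :=
    ha.mono (Set.range_comp_subset_range (n + ·) fun n => |a n|)
  simpa only [tailSup, Nat.add_sub_cancel' h] using le_ciSup hbdd (j - n)

lemma tailSup_le {n : ℕ} {w : ℝ} (h : ∀ j, n ≤ j → |a j| ≤ w) : tailSup a n ≤ w :=
  ciSup_le fun k => h _ (n.le_add_right k)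

lemma tailSup_nonneg (n : ℕ) : 0 ≤ tailSup a n :=
  Real.iSup_nonneg fun _ => abs_nonneg _

lemma antitone_tailSup (ha : BddAbove (Set.range fun n => |a n|)) : Antitone (tailSup a) :=
  fun _ _ h => tailSup_le fun _ hj => abs_le_tailSup ha (h.trans hj)

lemma tendsto_tailSup_zero (ha : Tendsto a atTop (𝓝 0)) : Tendsto (tailSup a) atTop (𝓝 0) := by
  rw [Metric.tendsto_atTop] at ha ⊢
  intro ε hε
  obtain ⟨N, hN⟩ := ha (ε / 2) (half_pos hε)
  refine ⟨N, fun n hn => ?_⟩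
  rw [Real.dist_0_eq_abs, abs_of_nonneg (tailSup_nonneg n)]
  refine (tailSup_le fun j hj => ?_).trans_lt (half_lt_self hε)
  rw [← Real.dist_0_eq_abs]
  exact (hN j (hn.trans hj)).le

end TailSup

section DominatedConvergence

variable {y : ℕ → Ω →ₘ[μ] ℝ} {x : Ω →ₘ[μ] ℝ}

lemma DominatedTendsto.exists_ae_bound (h : DominatedTendsto X y x) :
    ∃ w ∈ X, ∀ᵐ ω ∂μ, (∀ n, |y n ω| ≤ w ω) ∧ |x ω| ≤ w ω := by
  obtain ⟨⟨w, hwX, hw⟩, hlim⟩ := h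
  refine ⟨w, hwX, ?_⟩
  filter_upwards [ae_all_iff.2 fun n => abs_le_iff_ae_abs_le.1 (hw n), hlim] with ω hω hωlim
  exact ⟨hω, le_of_tendsto' hωlim.abs hω⟩

lemma DominatedTendsto.mem (h : DominatedTendsto X y x) (hX : IsIdealL0 X) : x ∈ X := by
  obtain ⟨w, hwX, hw⟩ := h.exists_ae_bound
  exact hX.mem_of_abs_le (abs_le_iff_ae_abs_le.2 (hw.mono fun _ hω => hω.2)) hwX

lemma DominatedTendsto.exists_ae_abs_sub_le (h : DominatedTendsto X y x) :
    ∃ w ∈ X, ∀ᵐ ω ∂μ, ∀ n, |y n ω - x ω| ≤ w ω := by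
  obtain ⟨w, hwX, hw⟩ := h.exists_ae_bound
  refine ⟨w + w, X.add_mem hwX hwX, ?_⟩
  filter_upwards [hw, AEEqFun.coeFn_add w w] with ω hω hadd n
  rw [hadd]
  exact (abs_sub _ _).trans (add_le_add (hω.1 n) hω.2)

theorem DominatedTendsto.orderConvNetIn (h : DominatedTendsto X y x) (hX : IsIdealL0 X) :
    OrderConvNetIn X y x := by
  obtain ⟨w, hwX, hw⟩ := h.exists_ae_abs_sub_le
  have hmeas (n : ℕ) : Measurable fun ω => tailSup (fun j => y j ω - x ω) n :=
    Measurable.iSup fun k => ((y (n + k)).measurable.sub x.measurable).norm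
  let z (n : ℕ) : Ω →ₘ[μ] ℝ := AEEqFun.mk _ (hmeas n).aestronglyMeasurable
  have hz : ∀ᵐ ω ∂μ, ∀ n, z n ω = tailSup (fun j => y j ω - x ω) n :=
    ae_all_iff.2 fun n => AEEqFun.coeFn_mk _ _
  have hbddAbove : ∀ᵐ ω ∂μ, BddAbove (Set.range fun j => |y j ω - x ω|) :=
    hw.mono fun ω hω => ⟨_, Set.forall_mem_range.2 hω⟩
  refine ⟨z, fun n => ?mem, fun n k hnk => ?antitone, fun n => ?nonneg, fun v _ hv => ?inf,
    .of_forall fun n => ?dominates⟩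
  case mem =>
    refine hX.mem_of_abs_le (abs_le_iff_ae_abs_le.2 ?_) hwX
    filter_upwards [hz, hw] with ω hzω hω
    rw [hzω, abs_of_nonneg (tailSup_nonneg n)]
    exact tailSup_le fun j _ => hω j
  case antitone =>
    rw [← AEEqFun.coeFn_le]
    filter_upwards [hz, hbddAbove] with ω hzω hω
    simpa only [hzω] using antitone_tailSup hω hnk
  case nonneg =>
    refine nonneg_iff_ae_nonneg.2 (hz.mono fun ω hzω => ?_)
    rw [hzω]
    exact tailSup_nonneg n
  case inf =>
    rw [← AEEqFun.coeFn_le]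
    filter_upwards [hz, ae_all_iff.2 fun n => AEEqFun.coeFn_le.2 (hv n), h.ae_tendsto,
      AEEqFun.coeFn_zero (α := Ω) (β := ℝ) (μ := μ)] with ω hzω hvω hlim hzero
    rw [hzero]
    simp only [hzω] at hvω
    exact ge_of_tendsto' (tendsto_tailSup_zero (tendsto_sub_nhds_zero_iff.2 hlim)) hvω
  case dominates =>
    apply abs_le_iff_ae_abs_le.2
    filter_upwards [hz, hbddAbove, AEEqFun.coeFn_sub (y n) x] with ω hzω hω hsub
    rw [hzω, hsub]
    exact abs_le_tailSup hω le_rfl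

/-- The nets of `OrderContinuousOn` are indexed by types in the universe of `Ω`, so sequences enter
through `ULift ℕ`. -/
theorem OrderContinuousOn.tendsto_of_orderConvNetIn {ψ : X →ₗ[ℝ] ℝ} (hψ : OrderContinuousOn X ψ)
    {y : ℕ → X} {x : X} (h : OrderConvNetIn X (fun n => (y n : Ω →ₘ[μ] ℝ)) x) :
    Tendsto (fun n => ψ (y n)) atTop (𝓝 (ψ x)) := by
  obtain ⟨z, hzX, hz_anti, hz_nonneg, hz_inf, hz⟩ := h
  have hdown : Tendsto (ULift.down : ULift.{u} ℕ → ℕ) atTop atTop :=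
    tendsto_atTop_atTop.2 fun n => ⟨⟨n⟩, fun _ h => h⟩
  have hup : Tendsto (ULift.up : ℕ → ULift.{u} ℕ) atTop atTop :=
    tendsto_atTop_atTop.2 fun n => ⟨n.down, fun _ h => h⟩
  have hlift := hψ (ULift.{u} ℕ) inferInstance inferInstance inferInstance
    (fun i => y i.down - x) ⟨fun i => z i.down, fun i => hzX _, fun _ _ h => hz_anti h,
      fun i => hz_nonneg _, fun v hv hvz => hz_inf v hv fun n => hvz ⟨n⟩,
      (hdown.eventually hz).mono fun i hi => by simpa using hi⟩
  simpa [Function.comp_def, tendsto_sub_nhds_zero_iff] using hlift.comp hup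

theorem OrderContinuousOn.tendsto_of_dominatedTendsto (hX : IsIdealL0 X) {ψ : X →ₗ[ℝ] ℝ}
    (hψ : OrderContinuousOn X ψ) {y : ℕ → X} {x : X}
    (h : DominatedTendsto X (fun n => (y n : Ω →ₘ[μ] ℝ)) x) :
    Tendsto (fun n => ψ (y n)) atTop (𝓝 (ψ x)) :=
  hψ.tendsto_of_orderConvNetIn (h.orderConvNetIn hX)

end DominatedConvergence

section ModulusSeminorm

lemma StrictlyPositiveOn.monotone {φ : X →ₗ[ℝ] ℝ} (hφ : StrictlyPositiveOn X φ) : Monotone φ := by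
  intro x y hxy
  rcases hxy.eq_or_lt with rfl | hlt
  · rfl
  · simpa using (hφ (y - x) (by simpa using hlt)).le

namespace IsIdealL0

/-- The modulus `|x|`, as an operation on the ideal `X`. -/
def modulus (hX : IsIdealL0 X) (x : X) : X :=
  ⟨|x|, hX.abs_mem x.2⟩

lemma modulus_nonneg (hX : IsIdealL0 X) (x : X) : 0 ≤ hX.modulus x :=
  abs_nonneg (x : Ω →ₘ[μ] ℝ)

lemma modulus_add_le (hX : IsIdealL0 X) (x y : X) :
    hX.modulus (x + y) ≤ hX.modulus x + hX.modulus y :=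
  abs_add_le (x : Ω →ₘ[μ] ℝ) y

lemma modulus_smul (hX : IsIdealL0 X) (c : ℝ) (x : X) :
    hX.modulus (c • x) = |c| • hX.modulus x := by
  refine Subtype.ext (AEEqFun.ext ?_)
  change ⇑|c • (x : Ω →ₘ[μ] ℝ)| =ᵐ[μ] ⇑(|c| • |(x : Ω →ₘ[μ] ℝ)|)
  filter_upwards [AEEqFun.coeFn_abs (c • (x : Ω →ₘ[μ] ℝ)), AEEqFun.coeFn_abs (x : Ω →ₘ[μ] ℝ),
    AEEqFun.coeFn_smul c (x : Ω →ₘ[μ] ℝ), AEEqFun.coeFn_smul |c| |(x : Ω →ₘ[μ] ℝ)|]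
    with ω hcx hx hsmul habs
  simp [hcx, hx, hsmul, habs, abs_mul]

/-- The seminorm `x ↦ φ |x|` of a positive functional `φ`: the abstract form of the `L¹`-norm of
the measure represented by `φ`. -/
noncomputable def modulusSeminorm (hX : IsIdealL0 X) {φ : X →ₗ[ℝ] ℝ} (hφ : Monotone φ) :
    Seminorm ℝ X :=
  Seminorm.of (fun x => φ (hX.modulus x))
    (fun x y => (hφ (hX.modulus_add_le x y)).trans_eq (map_add φ _ _))
    fun c x => by rw [hX.modulus_smul, map_smul, smul_eq_mul, Real.norm_eq_abs]

end IsIdealL0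

theorem OrderContinuousOn.of_abs_le_modulus (hX : IsIdealL0 X) {φ ψ : X → ℝ}
    (hφ : OrderContinuousOn X φ) (hψ : ∃ C, ∀ x, |ψ x| ≤ C * φ (hX.modulus x)) :
    OrderContinuousOn X ψ := by
  obtain ⟨C, hC⟩ := hψ
  rintro ι _ hdir hne y ⟨z, hzX, hz_anti, hz_nonneg, hz_inf, hz⟩
  have hmod : Tendsto (fun i => φ (hX.modulus (y i))) atTop (𝓝 0) :=
    hφ ι _ hdir hne _ ⟨z, hzX, hz_anti, hz_nonneg, hz_inf, hz.mono fun i hi => by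
      simpa [IsIdealL0.modulus] using hi⟩
  exact squeeze_zero_norm (fun i => hC (y i)) (by simpa using hmod.const_mul C)

end ModulusSeminorm

section SeminormSeparation

variable {E : Type*} [AddCommGroup E] [Module ℝ E] {s : Set E} {g : E}

theorem exists_linearMap_lt_of_forall_le_seminorm_sub (p : Seminorm ℝ E) (hs : Convex ℝ s)
    {ε : ℝ} (hε : 0 < ε) (hsg : ∀ y ∈ s, ε ≤ p (y - g)) :
    ∃ ψ : E →ₗ[ℝ] ℝ, (∃ C, ∀ x, |ψ x| ≤ C * p x) ∧ ∃ c, (∀ y ∈ s, ψ y < c) ∧ c < ψ g := by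
  let _ : SeminormedAddCommGroup E := p.toAddGroupSeminorm.toSeminormedAddCommGroup
  let _ : NormedSpace ℝ E := ⟨fun c x => (map_smul_eq_mul p c x).le⟩
  have hg : g ∉ closure s := by
    rw [Metric.mem_closure_iff]
    push Not
    exact ⟨ε, hε, fun y hy => (hsg y hy).trans_eq (dist_eq_norm' g y).symm⟩
  obtain ⟨ψ, c, hψs, hψg⟩ := geometric_hahn_banach_closed_point hs.closure isClosed_closure hg
  exact ⟨ψ, ⟨‖ψ‖, ψ.le_opNorm⟩, c, fun y hy => hψs y (subset_closure hy), hψg⟩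

/-- Mazur's theorem, for a topology that need not be comparable with that of `p`. -/
theorem exists_seminorm_sub_lt_of_mem_closure [TopologicalSpace E] (p : Seminorm ℝ E)
    (hp : ∀ ψ : E →ₗ[ℝ] ℝ, (∃ C, ∀ x, |ψ x| ≤ C * p x) → Continuous ψ) (hs : Convex ℝ s)
    (hg : g ∈ closure s) {ε : ℝ} (hε : 0 < ε) : ∃ y ∈ s, p (y - g) < ε := by
  by_contra! hsg
  obtain ⟨ψ, hψp, c, hψs, hψg⟩ := exists_linearMap_lt_of_forall_le_seminorm_sub p hs hε hsg
  exact hψg.not_ge <|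
    closure_minimal (fun y hy => (hψs y hy).le) (isClosed_Iic.preimage (hp ψ hψp)) hg

end SeminormSeparation

section WeakTopology

lemma continuous_weakOCTopology {ψ : X →ₗ[ℝ] ℝ} (hψ : OrderContinuousOn X ψ) :
    Continuous[weakOCTopology X, inferInstance] ψ :=
  continuous_iInf_dom (continuous_iInf_dom (i := hψ) continuous_induced_dom)

lemma tendsto_weakOCTopology {ι : Type*} {l : Filter ι} {y : ι → X} {x : X}
    (h : ∀ ψ : X →ₗ[ℝ] ℝ, OrderContinuousOn X ψ → Tendsto (fun i => ψ (y i)) l (𝓝 (ψ x))) :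
    Tendsto y l (@nhds X (weakOCTopology X) x) := by
  rw [weakOCTopology]
  simp only [nhds_iInf, nhds_induced, tendsto_iInf, tendsto_comap_iff]
  exact h

lemma weakOCTopology_continuousAdd : @ContinuousAdd X (weakOCTopology X) _ :=
  continuousAdd_iInf fun ψ => continuousAdd_iInf fun _ => continuousAdd_induced ψ

lemma weakOCTopology_continuousSMul : @ContinuousSMul ℝ X _ _ (weakOCTopology X) :=
  continuousSMul_iInf fun ψ => continuousSMul_iInf fun _ => continuousSMul_induced ψ

lemma DominatedTendsto.mem_of_isClosed (hX : IsIdealL0 X) {s : Set X}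
    (hs : IsClosed[weakOCTopology X] s) {y : ℕ → X} {x : X} (hy : ∀ n, y n ∈ s)
    (h : DominatedTendsto X (fun n => (y n : Ω →ₘ[μ] ℝ)) x) : x ∈ s :=
  @IsClosed.mem_of_tendsto _ (weakOCTopology X) _ _ _ _ _ _ hs
    (tendsto_weakOCTopology fun _ hψ => hψ.tendsto_of_dominatedTendsto hX h) (.of_forall hy)

end WeakTopology

section AlmostEverywhere

lemma IsIdealL0.inf_mem (hX : IsIdealL0 X) {e v : Ω →ₘ[μ] ℝ} (heX : e ∈ X) (he : 0 ≤ e)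
    (hv : 0 ≤ v) : e ⊓ v ∈ X :=
  hX.mem_of_abs_le ((abs_of_nonneg (le_inf he hv)).trans_le inf_le_left) heX

lemma IsIdealL0.exists_ae_eq_indicator_one (hX : IsIdealL0 X) (h1 : 1 ∈ X) {E : Set Ω}
    (hE : MeasurableSet E) : ∃ e : X, 0 ≤ e ∧ (e : Ω →ₘ[μ] ℝ) =ᵐ[μ] E.indicator 1 := by
  have hmeas : AEStronglyMeasurable (E.indicator (1 : Ω → ℝ)) μ :=
    (measurable_one.indicator hE).aestronglyMeasurable
  have he := AEEqFun.coeFn_mk _ hmeas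
  refine ⟨⟨AEEqFun.mk _ hmeas, hX.mem_of_ae_abs_le_one h1 ?_⟩, nonneg_iff_ae_nonneg.2 ?_, he⟩
  · filter_upwards [he] with ω hω
    rw [hω]
    exact abs_indicator_one_le_one E ω
  · filter_upwards [he] with ω hω
    rw [hω]
    exact Set.indicator_nonneg (fun _ _ => zero_le_one) ω

lemma dominatedTendsto_inf {e : Ω →ₘ[μ] ℝ} {s : ℕ → Ω →ₘ[μ] ℝ} (heX : e ∈ X) (he : 0 ≤ e)
    (hs : ∀ n, 0 ≤ s n) (hdiv : ∀ᵐ ω ∂μ, e ω ≠ 0 → Tendsto (fun n => s n ω) atTop atTop) :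
    DominatedTendsto X (fun n => e ⊓ s n) e := by
  refine ⟨⟨e, heX, fun n => (abs_of_nonneg (le_inf he (hs n))).trans_le inf_le_left⟩, ?_⟩
  filter_upwards [hdiv, ae_all_iff.2 fun n => AEEqFun.coeFn_inf e (s n),
    ae_all_iff.2 fun n => nonneg_iff_ae_nonneg.1 (hs n)] with ω hω hinf hsω
  have hle : ∀ᶠ n in atTop, e ω ≤ s n ω := by
    by_cases heω : e ω = 0
    · exact .of_forall fun n => heω.trans_le (hsω n)
    · exact (hω heω).eventually_ge_atTop (e ω)
  exact tendsto_const_nhds.congr' <| hle.mono fun n hn => ((hinf n).trans (inf_eq_left.2 hn)).symm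

variable {φ : X →ₗ[ℝ] ℝ}

lemma StrictlyPositiveOn.eq_zero_of_forall_nsmul_le (hφ : StrictlyPositiveOn X φ) {e : X}
    (he : 0 ≤ e) {M : ℝ} (hM : ∀ N : ℕ, φ (N • e) ≤ M) : e = 0 := by
  by_contra hne
  obtain ⟨N, hN⟩ := exists_lt_nsmul (hφ e (he.lt_of_ne' hne)) M
  exact ((hM N).trans_lt hN).ne (map_nsmul φ N e)

/-- If `s n → ∞` on `E`, then `N • 1_E ⊓ s n → N • 1_E` dominatedly, whence `φ (N • 1_E)` is bounded
in `N`. -/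
theorem StrictlyPositiveOn.ae_not_tendsto_atTop (hφ : StrictlyPositiveOn X φ) (hX : IsIdealL0 X)
    (hφ_oc : OrderContinuousOn X φ) (h1 : 1 ∈ X) {s : ℕ → X} (hs : ∀ n, 0 ≤ s n) {M : ℝ}
    (hM : ∀ n, φ (s n) ≤ M) :
    ∀ᵐ ω ∂μ, ¬ Tendsto (fun n => (s n : Ω →ₘ[μ] ℝ) ω) atTop atTop := by
  let E : Set Ω := {ω | Tendsto (fun n => (s n : Ω →ₘ[μ] ℝ) ω) atTop atTop}
  have hE : MeasurableSet E := measurableSet_tendsto atTop fun n => AEEqFun.measurable _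
  obtain ⟨e, he_nonneg, he⟩ := hX.exists_ae_eq_indicator_one h1 hE
  have hbound (N : ℕ) : φ (N • e) ≤ M := by
    have hNe : 0 ≤ N • e := nsmul_nonneg he_nonneg N
    have hdiv : ∀ᵐ ω ∂μ, (N • (e : Ω →ₘ[μ] ℝ)) ω ≠ 0 →
        Tendsto (fun n => (s n : Ω →ₘ[μ] ℝ) ω) atTop atTop := by
      filter_upwards [he, AEEqFun.coeFn_smul N (e : Ω →ₘ[μ] ℝ)] with ω hω hsmul hne
      by_contra hωE
      exact hne (by simp [hsmul, hω, Set.indicator_of_notMem (s := E) hωE])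
    exact le_of_tendsto' (hφ_oc.tendsto_of_dominatedTendsto hX
      (y := fun n => ⟨N • e ⊓ s n, hX.inf_mem (N • e).2 hNe (hs n)⟩)
      (dominatedTendsto_inf (N • e).2 hNe hs hdiv))
      fun n => (hφ.monotone (Subtype.coe_le_coe.1 inf_le_right)).trans (hM n)
  have he_zero : (e : Ω →ₘ[μ] ℝ) = 0 :=
    congrArg Subtype.val (hφ.eq_zero_of_forall_nsmul_le he_nonneg hbound)
  filter_upwards [he, AEEqFun.coeFn_zero (α := Ω) (β := ℝ) (μ := μ)] with ω hω hzero hωE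
  rw [he_zero, hzero, Set.indicator_of_mem (s := E) hωE] at hω
  exact zero_ne_one hω

theorem StrictlyPositiveOn.ae_summable (hφ : StrictlyPositiveOn X φ) (hX : IsIdealL0 X)
    (hφ_oc : OrderContinuousOn X φ) (h1 : 1 ∈ X) {y : ℕ → X}
    (hy : Summable fun n => φ (hX.modulus (y n))) :
    ∀ᵐ ω ∂μ, Summable fun n => (y n : Ω →ₘ[μ] ℝ) ω := by
  have hdiv := hφ.ae_not_tendsto_atTop hX hφ_oc h1
    (s := fun n => ∑ k ∈ Finset.range n, hX.modulus (y k))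
    (fun n => Finset.sum_nonneg fun k _ => hX.modulus_nonneg (y k))
    (M := ∑' n, φ (hX.modulus (y n))) fun n => by
      simpa only [map_sum] using hy.sum_le_tsum (Finset.range n) fun k _ =>
        (map_zero φ).symm.trans_le (hφ.monotone (hX.modulus_nonneg (y k)))
  have hsum : ∀ᵐ ω ∂μ, ∀ n, ((∑ k ∈ Finset.range n, hX.modulus (y k) : X) : Ω →ₘ[μ] ℝ) ω =
      ∑ k ∈ Finset.range n, (hX.modulus (y k) : Ω →ₘ[μ] ℝ) ω := ae_all_iff.2 fun n => by
    rw [Submodule.coe_sum]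
    exact AEEqFun.coeFn_fun_finsetSum _ _
  filter_upwards [hdiv, hsum, ae_all_iff.2 fun k => AEEqFun.coeFn_abs (y k : Ω →ₘ[μ] ℝ)]
    with ω hω hsumω habs
  refine Summable.of_norm (by_contra fun hnot => hω ?_)
  rw [not_summable_iff_tendsto_nat_atTop_of_nonneg fun k => norm_nonneg _] at hnot
  simp only [hsumω]
  exact hnot.congr fun n => Finset.sum_congr rfl fun k _ => (habs k).symm

end AlmostEverywhere

theorem exists_seq_ae_tendsto_of_mem_closure (hX : IsIdealL0 X) (h1 : 1 ∈ X) {φ : X →ₗ[ℝ] ℝ}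
    (hφ_oc : OrderContinuousOn X φ) (hφ : StrictlyPositiveOn X φ) {s : Set X} (hs : Convex ℝ s)
    {g : X} (hg : g ∈ @closure X (weakOCTopology X) s) :
    ∃ y : ℕ → X, (∀ n, y n ∈ s) ∧
      ∀ᵐ ω ∂μ, Tendsto (fun n => (y n : Ω →ₘ[μ] ℝ) ω) atTop (𝓝 ((g : Ω →ₘ[μ] ℝ) ω)) := by
  have happrox (n : ℕ) : ∃ y ∈ s, hX.modulusSeminorm hφ.monotone (y - g) < (1 / 2) ^ n :=
    @exists_seminorm_sub_lt_of_mem_closure X _ _ s g (weakOCTopology X) _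
      (fun _ hψ => continuous_weakOCTopology (hφ_oc.of_abs_le_modulus hX hψ)) hs hg _
      (by positivity)
  choose y hys hyg using happrox
  have hsummable : Summable fun n => φ (hX.modulus (y n - g)) :=
    summable_geometric_two.of_nonneg_of_le
      (fun n => apply_nonneg (hX.modulusSeminorm hφ.monotone) (y n - g)) fun n => (hyg n).le
  refine ⟨y, hys, ?_⟩
  filter_upwards [hφ.ae_summable hX hφ_oc h1 hsummable,
    ae_all_iff.2 fun n => AEEqFun.coeFn_sub (y n : Ω →ₘ[μ] ℝ) g] with ω hω hsub
  refine tendsto_sub_nhds_zero_iff.1 (hω.tendsto_atTop_zero.congr fun n => ?_)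
  exact hsub n

theorem mem_closure_optionSpace_of_measurable (hX : IsIdealL0 X) (h1 : 1 ∈ X) {f : Ω →ₘ[μ] ℝ}
    {g : X} {g' : Ω → ℝ} (hg' : Measurable[MeasurableSpace.comap f inferInstance] g')
    (hgg' : g =ᵐ[μ] g') :
    g ∈ @closure X (weakOCTopology X) {x | (x : Ω →ₘ[μ] ℝ) ∈ optionSpace f} := by
  let _ := weakOCTopology X
  have _ : ContinuousAdd X := weakOCTopology_continuousAdd
  have _ : ContinuousSMul ℝ X := weakOCTopology_continuousSMul
  let V : Submodule ℝ X := ((optionSpace f).comap X.subtype).topologicalClosure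
  have hV : ∀ y x, (∀ n, y n ∈ V.map X.subtype) → DominatedTendsto X y x →
      x ∈ V.map X.subtype := by
    intro y x hy h
    choose y' hy'V hy' using hy
    obtain rfl : (fun n => (y' n : Ω →ₘ[μ] ℝ)) = y := funext hy'
    exact ⟨⟨x, h.mem hX⟩, h.mem_of_isClosed hX isClosed_closure hy'V, rfl⟩
  have hfV : X ⊓ optionSpace f ≤ V.map X.subtype :=
    fun x hx => ⟨⟨x, hx.1⟩, subset_closure hx.2, rfl⟩
  obtain ⟨g₀, hg₀, hgg₀⟩ := mem_of_measurable_comap hX h1 hV hfV g.2 hg' hgg'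
  rwa [← Subtype.ext hgg₀]

theorem exists_measurable_comap_of_ae_tendsto {f g : Ω →ₘ[μ] ℝ} {y : ℕ → Ω →ₘ[μ] ℝ}
    (hy : ∀ n, y n ∈ optionSpace f)
    (hlim : ∀ᵐ ω ∂μ, Tendsto (fun n => y n ω) atTop (𝓝 (g ω))) :
    ∃ g' : Ω → ℝ, Measurable[MeasurableSpace.comap f inferInstance] g' ∧ g =ᵐ[μ] g' :=
  have hg := aestronglyMeasurable_of_ae_tendsto
    (fun n => aestronglyMeasurable_comap_of_mem_optionSpace (hy n)) hlim
  ⟨hg.mk g, hg.stronglyMeasurable_mk.measurable, hg.ae_eq_mk⟩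

theorem spanning_power_of_options_general (hX : IsIdealL0 X) (h1 : 1 ∈ X)
    (hφ : ∃ φ : X →ₗ[ℝ] ℝ, OrderContinuousOn X φ ∧ StrictlyPositiveOn X φ)
    (f : Ω →ₘ[μ] ℝ) (g : X) :
    List.TFAE [
      ∃ g' : Ω → ℝ, Measurable[MeasurableSpace.comap f inferInstance] g' ∧ g =ᵐ[μ] g',
      g ∈ @closure X (weakOCTopology X) {x | (x : Ω →ₘ[μ] ℝ) ∈ optionSpace f},
      ∃ gn : ℕ → X, (∀ n, (gn n : Ω →ₘ[μ] ℝ) ∈ optionSpace f) ∧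
        ∀ᵐ ω ∂μ, Tendsto (fun n => (gn n : Ω →ₘ[μ] ℝ) ω) atTop (𝓝 ((g : Ω →ₘ[μ] ℝ) ω))] := by
  obtain ⟨φ, hφ_oc, hφ_pos⟩ := hφ
  tfae_have 1 → 2 := fun ⟨_, hg', hgg'⟩ => mem_closure_optionSpace_of_measurable hX h1 hg' hgg'
  tfae_have 2 → 3 := exists_seq_ae_tendsto_of_mem_closure hX h1 hφ_oc hφ_pos
    ((optionSpace f).comap X.subtype).convex
  tfae_have 3 → 1 := fun ⟨_, hgn, hlim⟩ => exists_measurable_comap_of_ae_tendsto hgn hlim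
  tfae_finish

/-- Theorem 3.1: Let `X` be an ideal of `L⁰` containing the constants and
admitting a strictly positive order continuous functional, and `f ∈ X₊`. For `g ∈ X` TFAE:
(a) `g` is a contingent claim on `f` (i.e. `σ(f)`-measurable up to null sets);
(b) `g` is in the `σ(X, Xₙ~)`-closure of the option space `O_f`;
(c) some sequence of portfolios of options on `f` converges a.e. to `g`. -/
theorem spanning_power_of_options
    {m0 : MeasurableSpace Ω} {μ : Measure Ω} [IsProbabilityMeasure μ]
    (X : Submodule ℝ (Ω →ₘ[μ] ℝ)) (hX : IsIdealL0 X)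
    (hconst : ∀ c : ℝ, AEEqFun.const Ω (β := ℝ) c ∈ X)
    (hφ : ∃ φ : ↥X →ₗ[ℝ] ℝ, OrderContinuousOn X ⇑φ ∧ StrictlyPositiveOn X ⇑φ)
    (f : ↥X) (hf : 0 ≤ (f : Ω →ₘ[μ] ℝ)) (g : ↥X) :
    ((∃ g' : Ω → ℝ,
        Measurable[MeasurableSpace.comap (⇑(f : Ω →ₘ[μ] ℝ))
          (inferInstance : MeasurableSpace ℝ)] g' ∧ ⇑(g : Ω →ₘ[μ] ℝ) =ᵐ[μ] g') ↔
      g ∈ @closure _ (weakOCTopology X)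
        {x : ↥X | (x : Ω →ₘ[μ] ℝ) ∈ optionSpace (f : Ω →ₘ[μ] ℝ)}) ∧
    ((∃ g' : Ω → ℝ,
        Measurable[MeasurableSpace.comap (⇑(f : Ω →ₘ[μ] ℝ))
          (inferInstance : MeasurableSpace ℝ)] g' ∧ ⇑(g : Ω →ₘ[μ] ℝ) =ᵐ[μ] g') ↔
      ∃ gn : ℕ → ↥X, (∀ n, (gn n : Ω →ₘ[μ] ℝ) ∈ optionSpace (f : Ω →ₘ[μ] ℝ)) ∧
        ∀ᵐ ω ∂μ, Tendsto (fun n => (gn n : Ω →ₘ[μ] ℝ) ω) atTop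
          (nhds ((g : Ω →ₘ[μ] ℝ) ω))) :=
  have h := spanning_power_of_options_general hX (hconst 1) hφ f g
  ⟨h.out 0 1, h.out 0 2⟩
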